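/- arXiv:2510.07605 — 2 statements merged into one kernel-verified Lean document; each statement's English description precedes it below -/
import Mathlib

section
/- Let h ∈ M_n(ℂ) be positive semidefinite and let f : [0,∞) → ℝ be a continuous concave function. Then tr(f(h)) equals the minimum, over all finite resolutions of identity (p_1,…,p_k) in M_n(ℂ), of Σ_{i=1}^k f(α_i) · tr(p_i), where α_i = tr(p_i h)/tr(p_i). -/
/-!
The eigenprojections `q j` of `h` attain the minimum. Conversely, for a positive semidefinite
`a ≠ 0` the numbers `tr (a * q j)` are nonnegative weights of total mass `tr a`, and the
corresponding weighted mean of the eigenvalues is `tr (a * h) / tr a`. Jensen's inequality for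
each member of a resolution of identity, summed over the resolution, gives the lower bound since
the weights of the members at a given `q j` add up to `tr (q j) = 1`.
-/

open scoped Matrix ComplexOrder

open Matrix

section ResolutionOfIdentity

variable {R S κ κ' : Type*} [Semiring R] [Semiring S] [Fintype κ] [Fintype κ']

/-- A finite resolution of identity in a semiring with involution: a family of nonzero, pairwise
orthogonal, self-adjoint idempotents with sum `1`. -/
structure IsResolutionOfIdentity [Star R] (p : κ → R) : Prop
    extends CompleteOrthogonalIdempotents p where
  isSelfAdjoint (i : κ) : IsSelfAdjoint (p i)
  ne_zero (i : κ) : p i ≠ 0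

theorem isResolutionOfIdentity_iff [Star R] {p : κ → R} :
    IsResolutionOfIdentity p ↔
      (∀ i, IsSelfAdjoint (p i)) ∧ (∀ i, p i * p i = p i) ∧ (∀ i, p i ≠ 0) ∧
        (∀ i j, i ≠ j → p i * p j = 0) ∧ ∑ i, p i = 1 :=
  ⟨fun hp ↦ ⟨hp.isSelfAdjoint, hp.idem, hp.ne_zero, fun _ _ hij ↦ hp.ortho hij, hp.complete⟩,
    fun ⟨hsa, hidem, hne, hortho, hsum⟩ ↦
      ⟨⟨⟨hidem, fun _ _ hij ↦ hortho _ _ hij⟩, hsum⟩, hsa, hne⟩⟩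

namespace IsResolutionOfIdentity

theorem map [Star R] [Star S] {F : Type*} [FunLike F R S] [RingHomClass F R S]
    [StarHomClass F R S] {φ : F} (hφ : Function.Injective φ) {p : κ → R}
    (hp : IsResolutionOfIdentity p) :
    IsResolutionOfIdentity fun i ↦ φ (p i) where
  toCompleteOrthogonalIdempotents := hp.toCompleteOrthogonalIdempotents.map (φ : R →+* S)
  isSelfAdjoint i := (hp.isSelfAdjoint i).map φ
  ne_zero i := (map_ne_zero_iff φ hφ).2 (hp.ne_zero i)

theorem comp_equiv [Star R] {p : κ → R} (hp : IsResolutionOfIdentity p) (e : κ' ≃ κ) :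
    IsResolutionOfIdentity (p ∘ e) where
  toCompleteOrthogonalIdempotents :=
    (CompleteOrthogonalIdempotents.equiv e).2 hp.toCompleteOrthogonalIdempotents
  isSelfAdjoint i := hp.isSelfAdjoint (e i)
  ne_zero i := hp.ne_zero (e i)

theorem matrix_single [StarRing R] [Nontrivial R] [DecidableEq κ] :
    IsResolutionOfIdentity fun i : κ ↦ single i i (1 : R) where
  idem i := by simp [IsIdempotentElem]
  ortho i j hij := single_mul_single_of_ne (h := hij) ..
  complete := by rw [sum_single_eq_diagonal, diagonal_one]
  isSelfAdjoint i := by simp [IsSelfAdjoint, star_eq_conjTranspose]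
  ne_zero i hi := one_ne_zero (α := R) <| by simpa using congrFun₂ hi i i

end IsResolutionOfIdentity

end ResolutionOfIdentity

section PosSemidef

variable {𝕜 ι κ : Type*} [RCLike 𝕜] [Fintype ι] [Fintype κ] {a b : Matrix ι ι 𝕜}

open scoped MatrixOrder in
theorem IsResolutionOfIdentity.posSemidef [DecidableEq ι] {p : κ → Matrix ι ι 𝕜}
    (hp : IsResolutionOfIdentity p) (i : κ) : (p i).PosSemidef :=
  (IsStarProjection.nonneg ⟨hp.idem i, hp.isSelfAdjoint i⟩).posSemidef

theorem re_trace_pos_of_posSemidef_of_ne_zero (ha : a.PosSemidef) (ha₀ : a ≠ 0) :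
    0 < RCLike.re a.trace :=
  (RCLike.pos_iff.1 (ha.trace_nonneg.lt_of_ne' (mt ha.trace_eq_zero_iff.1 ha₀))).1

open scoped MatrixOrder in
theorem trace_mul_nonneg_of_posSemidef (ha : a.PosSemidef) (hb : b.PosSemidef) :
    0 ≤ (a * b).trace := by
  classical
  obtain ⟨c, rfl⟩ := CStarAlgebra.nonneg_iff_eq_star_mul_self.1 hb.nonneg
  rw [star_eq_conjTranspose, ← Matrix.mul_assoc, trace_mul_comm, ← Matrix.mul_assoc]
  exact (ha.mul_mul_conjTranspose_same c).trace_nonneg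

variable [DecidableEq ι] {s : Set ℝ} {f : ℝ → ℝ} {q : κ → Matrix ι ι 𝕜} {x : κ → ℝ}

theorem sum_map_mul_re_trace_mul_le (hf : ConcaveOn ℝ s f) (hx : ∀ j, x j ∈ s)
    (hq : ∀ j, (q j).PosSemidef) (hq_sum : ∑ j, q j = 1) (ha : a.PosSemidef) (ha₀ : a ≠ 0) :
    ∑ j, f (x j) * RCLike.re (a * q j).trace ≤
      f (RCLike.re (a * ∑ j, x j • q j).trace / RCLike.re a.trace) * RCLike.re a.trace := by
  have hpos : 0 < RCLike.re a.trace := re_trace_pos_of_posSemidef_of_ne_zero ha ha₀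
  have hweight (j : κ) : 0 ≤ RCLike.re (a * q j).trace :=
    (RCLike.nonneg_iff.1 (trace_mul_nonneg_of_posSemidef ha (hq j))).1
  have hmass : ∑ j, RCLike.re (a * q j).trace = RCLike.re a.trace := by
    rw [← map_sum, ← trace_sum, ← Finset.mul_sum, hq_sum, Matrix.mul_one]
  have hmean : ∑ j, RCLike.re (a * q j).trace * x j = RCLike.re (a * ∑ j, x j • q j).trace := by
    simp [Finset.mul_sum, trace_sum, RCLike.smul_re, mul_comm]
  have hjensen := hf.le_map_centerMass (t := Finset.univ) (fun j _ ↦ hweight j)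
    (hmass.symm ▸ hpos) (fun j _ ↦ hx j)
  simp only [Finset.centerMass, smul_eq_mul, Function.comp_apply, hmass, hmean,
    inv_mul_eq_div] at hjensen
  simpa only [mul_comm] using (div_le_iff₀ hpos).1 hjensen

theorem sum_map_mul_re_trace_le {κ' : Type*} [Fintype κ'] {p : κ' → Matrix ι ι 𝕜}
    (hf : ConcaveOn ℝ s f) (hx : ∀ j, x j ∈ s) (hq : ∀ j, (q j).PosSemidef)
    (hq_sum : ∑ j, q j = 1) (hp : ∀ i, (p i).PosSemidef) (hp₀ : ∀ i, p i ≠ 0)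
    (hp_sum : ∑ i, p i = 1) :
    ∑ j, f (x j) * RCLike.re (q j).trace ≤
      ∑ i, f (RCLike.re (p i * ∑ j, x j • q j).trace / RCLike.re (p i).trace) *
        RCLike.re (p i).trace := by
  have hmass (j : κ) : RCLike.re (q j).trace = ∑ i, RCLike.re (p i * q j).trace := by
    rw [← map_sum, ← trace_sum, ← Finset.sum_mul, hp_sum, Matrix.one_mul]
  calc ∑ j, f (x j) * RCLike.re (q j).trace
      = ∑ i, ∑ j, f (x j) * RCLike.re (p i * q j).trace := by
        simp only [hmass, Finset.mul_sum]
        exact Finset.sum_comm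
    _ ≤ _ := Finset.sum_le_sum fun i _ ↦
        sum_map_mul_re_trace_mul_le hf hx hq hq_sum (hp i) (hp₀ i)

end PosSemidef

section Eigenprojection

variable {𝕜 ι : Type*} [RCLike 𝕜] [Fintype ι] [DecidableEq ι] {h : Matrix ι ι 𝕜}

/-- The rank-one orthogonal projection onto the line spanned by the `j`-th vector of the
eigenvector basis of a Hermitian matrix, encoded as the conjugate of the `j`-th diagonal matrix
unit by the eigenvector unitary. A multiple eigenvalue thus has several eigenprojections. -/
noncomputable def eigenprojection (hh : h.IsHermitian) (j : ι) : Matrix ι ι 𝕜 :=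
  Unitary.conjStarAlgAut 𝕜 _ hh.eigenvectorUnitary (single j j 1)

theorem isResolutionOfIdentity_eigenprojection (hh : h.IsHermitian) :
    IsResolutionOfIdentity (eigenprojection hh) :=
  IsResolutionOfIdentity.matrix_single.map (EquivLike.injective _)

theorem trace_eigenprojection (hh : h.IsHermitian) (j : ι) : (eigenprojection hh j).trace = 1 := by
  rw [eigenprojection, Unitary.conjStarAlgAut_apply, trace_mul_cycle, Unitary.coe_star_mul_self,
    Matrix.one_mul, trace_single_eq_same]

theorem sum_eigenvalues_smul_eigenprojection (hh : h.IsHermitian) :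
    ∑ j, hh.eigenvalues j • eigenprojection hh j = h := by
  conv_rhs => rw [hh.spectral_theorem, ← sum_single_eq_diagonal, map_sum]
  refine Finset.sum_congr rfl fun j _ ↦ ?_
  rw [eigenprojection, RCLike.real_smul_eq_coe_smul (K := 𝕜), ← map_smul, smul_single, smul_eq_mul,
    mul_one, Function.comp_apply]

theorem eigenprojection_mul (hh : h.IsHermitian) (j : ι) :
    eigenprojection hh j * h = hh.eigenvalues j • eigenprojection hh j := by
  have horth := (isResolutionOfIdentity_eigenprojection hh).toOrthogonalIdempotents.mul_eq
  calc eigenprojection hh j * h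
      = eigenprojection hh j * ∑ i, hh.eigenvalues i • eigenprojection hh i := by
        rw [sum_eigenvalues_smul_eigenprojection]
    _ = hh.eigenvalues j • eigenprojection hh j := by simp [Finset.mul_sum, horth]

theorem re_trace_eigenprojection_mul (hh : h.IsHermitian) (j : ι) :
    RCLike.re (eigenprojection hh j * h).trace = hh.eigenvalues j := by
  simp [eigenprojection_mul, trace_eigenprojection, RCLike.smul_re]

end Eigenprojection

theorem sum_map_eigenvalues_le {𝕜 ι κ : Type*} [RCLike 𝕜] [Fintype ι] [DecidableEq ι] [Fintype κ]
    {h : Matrix ι ι 𝕜} (hh : h.IsHermitian) {s : Set ℝ} (hs : ∀ j, hh.eigenvalues j ∈ s)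
    {f : ℝ → ℝ} (hf : ConcaveOn ℝ s f) {p : κ → Matrix ι ι 𝕜} (hp : ∀ i, (p i).PosSemidef)
    (hp₀ : ∀ i, p i ≠ 0) (hp_sum : ∑ i, p i = 1) :
    ∑ j, f (hh.eigenvalues j) ≤
      ∑ i, f (RCLike.re (p i * h).trace / RCLike.re (p i).trace) * RCLike.re (p i).trace := by
  have hq := isResolutionOfIdentity_eigenprojection hh
  simpa only [sum_eigenvalues_smul_eigenprojection, trace_eigenprojection, RCLike.one_re, mul_one]
    using sum_map_mul_re_trace_le hf hs hq.posSemidef hq.complete hp hp₀ hp_sum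

theorem trace_concave_inf_resolutions_general {𝕜 ι : Type*} [RCLike 𝕜] [Fintype ι] [DecidableEq ι]
    {h : Matrix ι ι 𝕜} (hh : h.IsHermitian) {s : Set ℝ} (hs : ∀ j, hh.eigenvalues j ∈ s)
    {f : ℝ → ℝ} (hf : ConcaveOn ℝ s f) :
    IsLeast
      {r : ℝ | ∃ (k : ℕ) (p : Fin k → Matrix ι ι 𝕜), IsResolutionOfIdentity p ∧
        r = ∑ i, f (RCLike.re (p i * h).trace / RCLike.re (p i).trace) * RCLike.re (p i).trace}
      (∑ i, f (hh.eigenvalues i)) := by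
  constructor
  · let e : Fin (Fintype.card ι) ≃ ι := (Fintype.equivFin ι).symm
    refine ⟨_, eigenprojection hh ∘ e, (isResolutionOfIdentity_eigenprojection hh).comp_equiv e, ?_⟩
    simp [re_trace_eigenprojection_mul, trace_eigenprojection,
      e.sum_comp fun j ↦ f (hh.eigenvalues j)]
  · rintro _ ⟨k, p, hp, rfl⟩
    exact sum_map_eigenvalues_le hh hs hf hp.posSemidef hp.ne_zero hp.complete

/-- Variational formula for `tr(f(h))`, `h ≥ 0` in `M_n(ℂ)`, `f` continuous concave on `[0,∞)`:
`tr(f(h))` is the minimum over all finite resolutions of identity `(p_1, …, p_k)` of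
`Σ_i f(α_i) tr(p_i)` with `α_i = tr(p_i h)/tr(p_i)`.  Here `tr(f(h))` is expressed via the
spectral functional calculus as the sum of `f` over the eigenvalues of `h`. -/
theorem trace_concave_inf_resolutions {n : ℕ}
    (h : Matrix (Fin n) (Fin n) ℂ) (hh : h.PosSemidef)
    (f : ℝ → ℝ) (hf_cont : ContinuousOn f (Set.Ici 0)) (hf_conc : ConcaveOn ℝ (Set.Ici 0) f) :
    IsLeast
      {r : ℝ | ∃ (k : ℕ) (p : Fin k → Matrix (Fin n) (Fin n) ℂ),
        (∀ i, (p i).IsHermitian) ∧ (∀ i, p i * p i = p i) ∧ (∀ i, p i ≠ 0) ∧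
        (∀ i j, i ≠ j → p i * p j = 0) ∧ (∑ i, p i = 1) ∧
        r = ∑ i, f ((Matrix.trace (p i * h)).re / (Matrix.trace (p i)).re) *
              (Matrix.trace (p i)).re}
      (∑ i, f (hh.1.eigenvalues i)) := by
  simpa only [isResolutionOfIdentity_iff, and_assoc, isHermitian_iff_isSelfAdjoint,
    RCLike.re_eq_complex_re] using
      trace_concave_inf_resolutions_general hh.1 hh.eigenvalues_nonneg hf_conc
end

section
/- Let (X, 𝒜, μ) be a measure space with μ σ-finite, let g : X → [0,∞) be integrable, and let f : [0,∞) → ℝ be a continuous concave function with f(0) = 0 and f ∘ g ∈ L¹(μ). Then ∫ f ∘ g dμ = inf over all countable measurable partitions (A_i)_{i∈ℕ} of X into sets of finite measure of Σ_i f(α_i) μ(A_i), where α_i = μ(A_i)⁻¹ ∫_{A_i} g dμ and summands with μ(A_i) = 0 are taken to be 0. -/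
open MeasureTheory

/-!
Jensen's inequality on each piece of a partition bounds `∫ f ∘ g` above by the sum over that
partition. Conversely, take a strictly positive `d` with `∫ d ≤ ε`, which exists by σ-finiteness.
By continuity of `f` and the Lindelöf property of the (separable) range of `(g, d)`, the space
splits into countably many pieces, each mapped by `g` into a closed convex set on which `f`
oscillates by at most `d`. The average of `g` over a piece stays in that set, so the sum is at most
`∫ (f ∘ g + d) ≤ ∫ f ∘ g + ε`.
-/

open Set TopologicalSpace Topology
open scoped NNReal

section Cover

lemma exists_countable_biUnion_preimage_eq_univ {X Y : Type*} [TopologicalSpace Y]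
    [PseudoMetrizableSpace Y] {φ : X → Y} (hφ : IsSeparable (range φ)) {N : X → Set Y}
    (hN : ∀ x, N x ∈ 𝓝 (φ x)) :
    ∃ t : Set X, t.Countable ∧ ⋃ x ∈ t, φ ⁻¹' N x = univ := by
  have := hφ.secondCountableTopology
  let : TopologicalSpace X := .induced (rangeFactorization φ) inferInstance
  have : SecondCountableTopology X := secondCountableTopology_induced _ _ _
  have hcont : Continuous φ :=
    continuous_subtype_val.comp (continuous_induced_dom (f := rangeFactorization φ))
  exact TopologicalSpace.countable_cover_nhds fun x => hcont.continuousAt (hN x)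

lemma exists_closedBall_forall_le_add {Y : Type*} [PseudoMetricSpace Y] {f : Y → ℝ} {s : Set Y}
    (hs : IsClosed s) (hf : ContinuousOn f s) (y : Y) {δ : ℝ} (hδ : 0 < δ) :
    ∃ r > 0, ∀ u ∈ Metric.closedBall y r ∩ s, ∀ v ∈ Metric.closedBall y r ∩ s,
      f u ≤ f v + δ := by
  have hfy : ContinuousWithinAt f s y := by
    by_cases hy : y ∈ s
    · exact hf y hy
    · exact continuousWithinAt_of_notMem_closure (by rwa [hs.closure_eq])
  have hnear : ∀ᶠ u in 𝓝[s] y, |f u - f y| < δ / 2 :=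
    hfy (Metric.ball_mem_nhds _ (half_pos hδ))
  obtain ⟨r, hr, hball⟩ :=
    (nhdsWithin_hasBasis Metric.nhds_basis_closedBall s).eventually_iff.1 hnear
  refine ⟨r, hr, fun u hu v hv => ?_⟩
  have hu' := abs_lt.1 (hball hu)
  have hv' := abs_lt.1 (hball hv)
  linarith [hu'.2, hv'.1]

end Cover

lemma summable_of_le_of_le {ι : Type*} {a b c : ι → ℝ} (hab : ∀ i, a i ≤ b i)
    (hbc : ∀ i, b i ≤ c i) (ha : Summable a) (hc : Summable c) : Summable b := by
  have hgap : Summable fun i => b i - a i :=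
    .of_nonneg_of_le (fun i => sub_nonneg.2 (hab i)) (fun i => sub_le_sub_right (hbc i) _)
      (hc.sub ha)
  simpa using hgap.add ha

section Partition

variable {X : Type*} [MeasurableSpace X] {μ : Measure X}

/-- A countable measurable partition of the whole space into sets of finite measure. It is indexed
by `ℕ`, so pieces are allowed to be empty. -/
structure IsFiniteMeasurePartition (μ : Measure X) (A : ℕ → Set X) : Prop where
  measurableSet (i : ℕ) : MeasurableSet (A i)
  pairwise_disjoint : Pairwise (Function.onFun Disjoint A)
  iUnion_eq_univ : ⋃ i, A i = univ
  measure_lt_top (i : ℕ) : μ (A i) < ⊤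

lemma isFiniteMeasurePartition_iff {A : ℕ → Set X} :
    IsFiniteMeasurePartition μ A ↔ (∀ i, MeasurableSet (A i)) ∧
      Pairwise (Function.onFun Disjoint A) ∧ ⋃ i, A i = univ ∧ ∀ i, μ (A i) < ⊤ :=
  ⟨fun ⟨hm, hd, hu, hμ⟩ => ⟨hm, hd, hu, hμ⟩, fun ⟨hm, hd, hu, hμ⟩ => ⟨hm, hd, hu, hμ⟩⟩

lemma IsFiniteMeasurePartition.hasSum_setIntegral {F : Type*} [NormedAddCommGroup F]
    [NormedSpace ℝ F] {A : ℕ → Set X} (hA : IsFiniteMeasurePartition μ A) {h : X → F}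
    (hh : Integrable h μ) :
    HasSum (fun i => ∫ x in A i, h x ∂μ) (∫ x, h x ∂μ) := by
  simpa [hA.iUnion_eq_univ] using
    hasSum_integral_iUnion hA.measurableSet hA.pairwise_disjoint hh.integrableOn

lemma exists_isFiniteMeasurePartition_subordinate {ι : Type*} [Countable ι] {C : ι → Set X}
    (hCm : ∀ j, MeasurableSet (C j)) (hCμ : ∀ j, μ (C j) < ⊤) (hCu : ⋃ j, C j = univ) :
    ∃ A, IsFiniteMeasurePartition μ A ∧ ∀ i, A i = ∅ ∨ ∃ j, A i ⊆ C j := by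
  have := Encodable.ofCountable ι
  let D : ℕ → Set X := fun n => ⋃ j ∈ Encodable.decode₂ ι n, C j
  refine ⟨disjointed D, ⟨fun i => .disjointed (fun n => ?_) i, disjoint_disjointed D, ?_,
    fun i => (measure_mono (disjointed_subset D i)).trans_lt ?_⟩, fun i => ?_⟩
  · exact Encodable.iUnion_decode₂_cases (C := MeasurableSet) .empty hCm
  · rw [iUnion_disjointed, Encodable.iUnion_decode₂, hCu]
  · exact Encodable.iUnion_decode₂_cases (C := fun B => μ B < ⊤) (by simp) hCμ
  · have hD : D i = ∅ ∨ ∃ j, D i ⊆ C j :=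
      Encodable.iUnion_decode₂_cases (C := fun B => B = ∅ ∨ ∃ j, B ⊆ C j) (.inl rfl)
        fun j => .inr ⟨j, Subset.rfl⟩
    exact hD.imp (fun h => subset_eq_empty (disjointed_subset D i) h)
      fun ⟨j, hj⟩ => ⟨j, (disjointed_subset D i).trans hj⟩

lemma exists_pos_integrable_integral_le (μ : Measure X) [SigmaFinite μ] {ε : ℝ} (hε : 0 < ε) :
    ∃ d : X → ℝ, (∀ x, 0 < d x) ∧ Measurable d ∧ Integrable d μ ∧ ∫ x, d x ∂μ ≤ ε := by
  lift ε to ℝ≥0 using hε.le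
  obtain ⟨d, hd_pos, hd_meas, hd_lt⟩ :=
    exists_pos_lintegral_lt_of_sigmaFinite μ (ε := ε) (by exact_mod_cast hε.ne')
  refine ⟨fun x => d x, hd_pos, hd_meas.coe_nnreal_real,
    ⟨hd_meas.coe_nnreal_real.aestronglyMeasurable, ?_⟩,
    integral_coe_le_of_lintegral_coe_le hd_lt.le⟩
  simpa [HasFiniteIntegral] using hd_lt.trans ENNReal.coe_lt_top

variable {E : Type*} [NormedAddCommGroup E] [NormedSpace ℝ E] {s : Set E} {f : E → ℝ} {g : X → E}

lemma exists_isFiniteMeasurePartition_forall_ae_le_add (hs : IsClosed s) (hs_conv : Convex ℝ s)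
    (hf : ContinuousOn f s) (hg : AEStronglyMeasurable g μ) (hgs : ∀ᵐ x ∂μ, g x ∈ s) {d : X → ℝ}
    (hd_pos : ∀ x, 0 < d x) (hd_meas : Measurable d) (hd_int : Integrable d μ) :
    ∃ A, IsFiniteMeasurePartition μ A ∧ ∀ i, ∃ K, IsClosed K ∧ Convex ℝ K ∧
      ∀ᵐ x ∂μ.restrict (A i), g x ∈ K ∧ ∀ u ∈ K, f u ≤ f (g x) + d x := by
  borelize E
  obtain ⟨g', hg'_meas, hgg'⟩ := hg
  choose r hr_pos hr using fun x =>
    exists_closedBall_forall_le_add hs hf (g' x) (half_pos (hd_pos x))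
  let B : X → Set E := fun x => Metric.closedBall (g' x) (r x)
  let C : X → Set X := fun x => g' ⁻¹' B x ∩ d ⁻¹' Ici (d x / 2)
  obtain ⟨t, ht, htC⟩ : ∃ t : Set X, t.Countable ∧ ⋃ x ∈ t, C x = univ :=
    exists_countable_biUnion_preimage_eq_univ (φ := fun x => (g' x, d x))
      (hg'_meas.prodMk hd_meas.stronglyMeasurable).isSeparable_range
      fun x => prod_mem_nhds (Metric.closedBall_mem_nhds _ (hr_pos x))
        (Ici_mem_nhds (half_lt_self (hd_pos x)))
  have := ht.to_subtype
  obtain ⟨A, hA, hAC⟩ := exists_isFiniteMeasurePartition_subordinate (μ := μ)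
    (C := fun x : t => C x)
    (fun x => (hg'_meas.measurable Metric.isClosed_closedBall.measurableSet).inter
      (hd_meas measurableSet_Ici))
    (fun x => (measure_mono inter_subset_right).trans_lt
      (hd_int.measure_ge_lt_top (half_pos (hd_pos x))))
    (by rw [iUnion_coe_set, htC])
  refine ⟨A, hA, fun i => ?_⟩
  obtain hAi | ⟨x₀, hx₀⟩ := hAC i
  · exact ⟨∅, isClosed_empty, convex_empty, by simp [hAi]⟩
  refine ⟨B x₀ ∩ s, Metric.isClosed_closedBall.inter hs,
    (convex_closedBall _ _).inter hs_conv, ?_⟩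
  filter_upwards [ae_restrict_of_ae hgg', ae_restrict_of_ae hgs,
    ae_restrict_mem (hA.measurableSet i)] with x hx hxs hxA
  obtain ⟨hxB, hxd⟩ := hx₀ hxA
  have hgx : g x ∈ B x₀ ∩ s := ⟨hx ▸ hxB, hxs⟩
  exact ⟨hgx, fun u hu => (hr x₀ u hu _ hgx).trans (add_le_add_right hxd _)⟩

end Partition

section Average

variable {X : Type*} [MeasurableSpace X] {μ : Measure X} {A : Set X}
  {E : Type*} [NormedAddCommGroup E] [NormedSpace ℝ E] [CompleteSpace E]
  {s : Set E} {f : E → ℝ} {g : X → E}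

lemma setIntegral_comp_le_map_setAverage_mul_measureReal (hf : ConcaveOn ℝ s f)
    (hf_cont : ContinuousOn f s) (hs : IsClosed s) (hA : μ A ≠ ⊤)
    (hgs : ∀ᵐ x ∂μ.restrict A, g x ∈ s) (hg : IntegrableOn g A μ)
    (hfg : IntegrableOn (fun x => f (g x)) A μ) :
    ∫ x in A, f (g x) ∂μ ≤ f (⨍ x in A, g x ∂μ) * μ.real A := by
  by_cases h0 : μ A = 0
  · simp [h0, measureReal_def, Measure.restrict_eq_zero.2 h0]
  calc ∫ x in A, f (g x) ∂μ = (⨍ x in A, f (g x) ∂μ) * μ.real A := by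
        rw [← measure_smul_setAverage _ hA, smul_eq_mul, mul_comm]
    _ ≤ f (⨍ x in A, g x ∂μ) * μ.real A := by
        gcongr
        exact hf.le_map_set_average hf_cont hs h0 hA hgs hg hfg

lemma map_setAverage_mul_measureReal_le_setIntegral {K : Set E} (hK : IsClosed K)
    (hK_conv : Convex ℝ K) (hA : μ A ≠ ⊤) {h : X → ℝ}
    (hle : ∀ᵐ x ∂μ.restrict A, g x ∈ K ∧ ∀ u ∈ K, f u ≤ h x) (hg : IntegrableOn g A μ)
    (hh : IntegrableOn h A μ) :
    f (⨍ x in A, g x ∂μ) * μ.real A ≤ ∫ x in A, h x ∂μ := by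
  by_cases h0 : μ A = 0
  · simp [h0, measureReal_def, Measure.restrict_eq_zero.2 h0]
  have havg : ⨍ x in A, g x ∂μ ∈ K :=
    hK_conv.set_average_mem hK h0 hA (hle.mono fun _ hx => hx.1) hg
  calc f (⨍ x in A, g x ∂μ) * μ.real A = ∫ _ in A, f (⨍ x in A, g x ∂μ) ∂μ := by
        rw [setIntegral_const, smul_eq_mul, mul_comm]
    _ ≤ ∫ x in A, h x ∂μ :=
        integral_mono_ae (integrableOn_const hA) hh (hle.mono fun _ hx => hx.2 _ havg)

theorem integral_concave_partition_variational_general [SigmaFinite μ] (hf : ConcaveOn ℝ s f)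
    (hf_cont : ContinuousOn f s) (hs : IsClosed s) (hgs : ∀ᵐ x ∂μ, g x ∈ s)
    (hg : Integrable g μ) (hfg : Integrable (fun x => f (g x)) μ) :
    IsGLB
      {r : ℝ | ∃ A, IsFiniteMeasurePartition μ A ∧
        Summable (fun i => f (⨍ x in A i, g x ∂μ) * μ.real (A i)) ∧
        r = ∑' i, f (⨍ x in A i, g x ∂μ) * μ.real (A i)}
      (∫ x, f (g x) ∂μ) := by
  have jensen {A} (hA : IsFiniteMeasurePartition μ A) (i : ℕ) :
      ∫ x in A i, f (g x) ∂μ ≤ f (⨍ x in A i, g x ∂μ) * μ.real (A i) :=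
    setIntegral_comp_le_map_setAverage_mul_measureReal hf hf_cont hs (hA.measure_lt_top i).ne
      (ae_restrict_of_ae hgs) hg.integrableOn hfg.integrableOn
  refine ⟨?_, fun b hb => le_of_forall_pos_le_add fun ε hε => ?_⟩
  · rintro _ ⟨A, hA, hsum, rfl⟩
    exact hasSum_le (jensen hA) (hA.hasSum_setIntegral hfg) hsum.hasSum
  obtain ⟨d, hd_pos, hd_meas, hd_int, hdε⟩ := exists_pos_integrable_integral_le μ hε
  obtain ⟨A, hA, hAK⟩ := exists_isFiniteMeasurePartition_forall_ae_le_add hs hf.1 hf_cont hg.1 hgs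
    hd_pos hd_meas hd_int
  have upper (i : ℕ) :
      f (⨍ x in A i, g x ∂μ) * μ.real (A i) ≤ ∫ x in A i, (f (g x) + d x) ∂μ := by
    obtain ⟨K, hK, hK_conv, hle⟩ := hAK i
    exact map_setAverage_mul_measureReal_le_setIntegral hK hK_conv (hA.measure_lt_top i).ne hle
      hg.integrableOn (hfg.add hd_int).integrableOn
  have hlo := hA.hasSum_setIntegral hfg
  have hhi := hA.hasSum_setIntegral (hfg.add hd_int)
  have hsum : Summable fun i => f (⨍ x in A i, g x ∂μ) * μ.real (A i) :=
    summable_of_le_of_le (jensen hA) upper hlo.summable hhi.summable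
  calc b ≤ ∑' i, f (⨍ x in A i, g x ∂μ) * μ.real (A i) := hb ⟨A, hA, hsum, rfl⟩
    _ ≤ ∫ x, (f (g x) + d x) ∂μ := hasSum_le upper hsum.hasSum hhi
    _ = ∫ x, f (g x) ∂μ + ∫ x, d x ∂μ := integral_add hfg hd_int
    _ ≤ ∫ x, f (g x) ∂μ + ε := by gcongr

end Average

/-- Variational formula over countable partitions (commutative, concave case): for σ-finite `μ`,
`g ≥ 0` integrable and `f` continuous concave on `[0,∞)` with `f(0) = 0` and `f ∘ g ∈ L¹(μ)`,
`∫ f ∘ g dμ` is the infimum, over countable measurable partitions `(A_i)` of `X` into sets of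
finite measure, of `Σ_i f(α_i) μ(A_i)` with `α_i = μ(A_i)⁻¹ ∫_{A_i} g dμ` (summands with
`μ(A_i) = 0` vanish automatically, as then `α_i = 0`, `f(0) = 0` and the factor `μ(A_i)` is 0). -/
theorem integral_concave_partition_variational
    {X : Type*} [MeasurableSpace X] (μ : Measure X) [SigmaFinite μ]
    (g : X → ℝ) (hg_nonneg : ∀ x, 0 ≤ g x) (hg_int : Integrable g μ)
    (f : ℝ → ℝ) (hf_cont : ContinuousOn f (Set.Ici 0)) (hf_conc : ConcaveOn ℝ (Set.Ici 0) f)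
    (hf0 : f 0 = 0) (hfg_int : Integrable (fun x => f (g x)) μ) :
    IsGLB
      {r : ℝ | ∃ A : ℕ → Set X,
        (∀ i, MeasurableSet (A i)) ∧ Pairwise (Function.onFun Disjoint A) ∧
        (⋃ i, A i) = Set.univ ∧ (∀ i, μ (A i) < ⊤) ∧
        Summable (fun i =>
          f (((μ (A i)).toReal)⁻¹ * ∫ x in A i, g x ∂μ) * (μ (A i)).toReal) ∧
        r = ∑' i, f (((μ (A i)).toReal)⁻¹ * ∫ x in A i, g x ∂μ) * (μ (A i)).toReal}
      (∫ x, f (g x) ∂μ) := by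
  simpa only [isFiniteMeasurePartition_iff, and_assoc, setAverage_eq, smul_eq_mul, measureReal_def]
    using integral_concave_partition_variational_general hf_conc hf_cont isClosed_Ici
      (.of_forall hg_nonneg) hg_int hfg_int
end
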